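/- Let K > 0 and J ∈ ℝ, and assume φ_{K,J} attains its minimum over [−1,1] at a unique point m* ∈ (−1,1) with φ_{K,J}''(m*) > 0. Set λ_n = (1 − (m*)²)·φ_{K,J}''(m*)/n; note 0 < λ_n < 1 for n large. Then there exists a constant C = C(K,J) > 0 such that for every n ≥ 1 there is an exchangeable pair (W_n, W_n') of real random variables on a common probability space with W_n distributed as (S_n − n·m*)/σ_n under P_{n,K,J}, satisfying: |W_n − W_n'| ≤ 2/σ_n almost surely; E(W_n − W_n' | W_n) = λ_n·W_n + R_n almost surely for a σ(W_n)-measurable random variable R_n with E|R_n| ≤ C·n^{−3/2}; and E| 1 − (1/(2λ_n))·E((W_n − W_n')² | W_n) | ≤ C·n^{−1/2}. -/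

import Mathlib

/-!
The pair comes from one step of Glauber dynamics in equilibrium: draw `x` from the Gibbs measure,
pick a site uniformly, resample its spin from its conditional law given the other spins, and let
`W`, `W'` be the normalized magnetizations before and after the step. Detailed balance makes the
pair exchangeable, and one step changes the total magnetization `S` by at most `2`.

Given the configuration, the law of `S - S'` depends only on the magnetization per particle `m`, so
both conditional expectations given `W` are explicit. Up to `O(1/n)` they are
`1 + m - 2 s(2 h'(m))` for `S - S'` and `4 ((1 + m)/2 - m s(2 h'(m)))` for `(S - S')²`, where `s` is
the sigmoid and `h` the energy density. The equation `φ'(a) = 0` says `s(2 h'(a)) = (1 + a)/2`;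
hence the drift vanishes to leading order at `m = a`, with slope `(1 - a²) φ''(a)`, and the flip
probability there is `(1 - a²)/2`. Both error bounds then follow from `E(m - a)² = O(1/n)`.

This second-moment bound uses the pair itself. Exchangeability gives
`E[(S - n a) (S - S')] = E(S - S')² / 2 ≤ 2`, and near `a` the product of `m - a` with the drift is
at least `c (m - a)²` up to `O(1/n)`. Away from `a` the probability is `O(1/n)`: the number of
configurations of magnetization `m` is at most `exp (-n I(m))`, while tilting by the binomial law of
mean `a` and Jensen's inequality give `Z ≥ c exp (-n φ(a))`.
-/

open MeasureTheory ProbabilityTheory Real Filter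

noncomputable section

/-- The spin value `±1` associated with a Boolean. -/
def spin (b : Bool) : ℝ := if b then 1 else -1

/-- Total magnetization `S_n(x) = ∑ i, x_i`. -/
def totalMag (n : ℕ) (x : Fin n → Bool) : ℝ := ∑ i, spin (x i)

/-- Magnetization per particle `m_n(x) = S_n(x)/n`. -/
def magPP (n : ℕ) (x : Fin n → Bool) : ℝ := totalMag n x / n

/-- Boltzmann–Gibbs weight of a configuration in the cubic Curie–Weiss model
(the reference factor `2^{-n}` is constant and cancels upon normalization). -/
def cubicWeight (n : ℕ) (K J : ℝ) (x : Fin n → Bool) : ℝ :=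
  Real.exp (n * (K / 3 * (magPP n x) ^ 3 + J / 2 * (magPP n x) ^ 2))

/-- The cubic Curie–Weiss Boltzmann–Gibbs probability measure `P_{n,K,J}`. -/
def cubicMeasure (n : ℕ) (K J : ℝ) : Measure (Fin n → Bool) :=
  (∑ x : Fin n → Bool, ENNReal.ofReal (cubicWeight n K J x))⁻¹ •
    ∑ x : Fin n → Bool, ENNReal.ofReal (cubicWeight n K J x) • Measure.dirac x

/-- The probability of an event under `P_{n,K,J}`, as a real number. -/
def cubicProb (n : ℕ) (K J : ℝ) (s : Set (Fin n → Bool)) : ℝ :=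
  (cubicMeasure n K J s).toReal

/-- The binary relative entropy `I(m)`. -/
def binEnt (m : ℝ) : ℝ :=
  (1 - m) / 2 * Real.log ((1 - m) / 2) + (1 + m) / 2 * Real.log ((1 + m) / 2)

/-- The function `φ_{K,J}(x) = I(x) − (K/3)x³ − (J/2)x²`. -/
def phiKJ (K J : ℝ) (x : ℝ) : ℝ := binEnt x - K / 3 * x ^ 3 - J / 2 * x ^ 2

/-- The standard normal cumulative distribution function. -/
def stdNormalCDF (z : ℝ) : ℝ :=
  (ProbabilityTheory.gaussianReal 0 1 (Set.Iic z)).toReal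

end

section Calculus

variable {f : ℝ → ℝ} {s : Set ℝ}

lemma exists_abs_sub_le_of_contDiff (hf : ContDiff ℝ 1 f) (hs : IsCompact s) (hconv : Convex ℝ s) :
    ∃ C, 0 ≤ C ∧ ∀ x ∈ s, ∀ y ∈ s, |f y - f x| ≤ C * |y - x| := by
  obtain ⟨C, hC⟩ := hf.contDiffOn.exists_lipschitzOnWith one_ne_zero hconv hs
  exact ⟨C, C.2, fun x hx y hy => hC.dist_le_mul y hy x hx⟩

lemma exists_abs_taylor_one_remainder_le (hf : ContDiff ℝ 2 f) (hs : IsCompact s)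
    (hconv : Convex ℝ s) :
    ∃ C, 0 ≤ C ∧ ∀ x ∈ s, ∀ y ∈ s, |f y - f x - deriv f x * (y - x)| ≤ C * (y - x) ^ 2 := by
  have hf' : ContDiff ℝ 1 (deriv f) := ContDiff.deriv' hf
  obtain ⟨C, hC, hlip⟩ := exists_abs_sub_le_of_contDiff hf' hs hconv
  refine ⟨C, hC, fun x hx y hy => ?_⟩
  have hxy : Set.uIcc x y ⊆ s := hconv.ordConnected.uIcc_subset hx hy
  have hderiv (t : ℝ) (_ : t ∈ Set.uIcc x y) :
      HasDerivWithinAt (fun t => f t - deriv f x * t) (deriv f t - deriv f x) (Set.uIcc x y) t :=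
    (hf.differentiable two_ne_zero t).hasDerivAt.hasDerivWithinAt.fun_sub
      (hasDerivAt_const_mul _).hasDerivWithinAt
  have hbound (t : ℝ) (ht : t ∈ Set.uIcc x y) : ‖deriv f t - deriv f x‖ ≤ C * |y - x| :=
    (hlip x hx t (hxy ht)).trans
      (mul_le_mul_of_nonneg_left (Set.abs_sub_left_of_mem_uIcc ht) hC)
  have := (convex_uIcc x y).norm_image_sub_le_of_norm_hasDerivWithin_le hderiv hbound
    Set.left_mem_uIcc Set.right_mem_uIcc
  rw [Real.norm_eq_abs, Real.norm_eq_abs, mul_assoc, abs_mul_abs_self, ← pow_two] at this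
  convert this using 2
  ring

lemma lipschitzWith_sigmoid : LipschitzWith 1 sigmoid := by
  refine lipschitzWith_of_nnnorm_deriv_le differentiable_sigmoid fun x => ?_
  rw [deriv_sigmoid, ← NNReal.coe_le_coe, coe_nnnorm, Real.norm_eq_abs, NNReal.coe_one,
    abs_of_nonneg (mul_nonneg (sigmoid_nonneg x) (sub_nonneg.2 (sigmoid_le_one x)))]
  nlinarith [sq_nonneg (sigmoid x), sigmoid_le_one x, sigmoid_nonneg x]

end Calculus

section ReversibleKernel

variable {Ω E : Type*} [MeasurableSpace Ω] [MeasurableSpace E] {μ : Measure Ω} {κ : Kernel Ω Ω}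

lemma map_swap_compProd_of_isReversible [IsFiniteMeasure μ] [IsMarkovKernel κ]
    (hκ : κ.IsReversible μ) : (μ ⊗ₘ κ).map Prod.swap = μ ⊗ₘ κ := by
  refine Measure.ext_prod fun {A B} hA hB => ?_
  rw [Measure.map_apply measurable_swap (hA.prod hB), Set.preimage_swap_prod,
    Measure.compProd_apply_prod hB hA, Measure.compProd_apply_prod hA hB, hκ hA hB]

/-- The joint law of `(W X, W X')`, where `X` has law `μ` and `X'` is obtained from `X` by one step
of the Markov kernel `κ`. -/
noncomputable def stepLaw (μ : Measure Ω) (κ : Kernel Ω Ω) (W : Ω → E) : Measure (E × E) :=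
  (μ ⊗ₘ κ).map (Prod.map W W)

variable {W : Ω → E}

lemma isProbabilityMeasure_stepLaw [IsProbabilityMeasure μ] [IsMarkovKernel κ]
    (hW : Measurable W) : IsProbabilityMeasure (stepLaw μ κ W) :=
  Measure.isProbabilityMeasure_map (hW.prodMap hW).aemeasurable

lemma map_swap_stepLaw [IsFiniteMeasure μ] [IsMarkovKernel κ] (hκ : κ.IsReversible μ)
    (hW : Measurable W) : (stepLaw μ κ W).map Prod.swap = stepLaw μ κ W := by
  have hWW := hW.prodMap hW
  rw [stepLaw, Measure.map_map measurable_swap hWW]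
  conv_rhs => rw [← map_swap_compProd_of_isReversible hκ]
  rw [Measure.map_map hWW measurable_swap]
  rfl

lemma map_fst_stepLaw [SFinite μ] [IsMarkovKernel κ] (hW : Measurable W) :
    (stepLaw μ κ W).map Prod.fst = μ.map W := by
  rw [stepLaw, Measure.map_map measurable_fst (hW.prodMap hW), Prod.map_fst',
    ← Measure.map_map hW measurable_fst]
  exact congrArg _ (Measure.fst_compProd μ κ)

lemma ae_stepLaw_of_forall_ae (hW : Measurable W) {p : E × E → Prop} (hp : MeasurableSet {z | p z})
    (h : ∀ x, ∀ᵐ y ∂κ x, p (W x, W y)) : ∀ᵐ z ∂stepLaw μ κ W, p z :=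
  (ae_map_iff (hW.prodMap hW).aemeasurable hp).2 <|
    Measure.ae_compProd_of_ae_ae (hW.prodMap hW hp) (.of_forall h)

lemma integral_fst_stepLaw [SFinite μ] [IsMarkovKernel κ] (hW : Measurable W) {g : E → ℝ}
    (hg : Measurable g) : ∫ p, g p.1 ∂stepLaw μ κ W = ∫ x, g (W x) ∂μ := by
  rw [← integral_map hW.aemeasurable hg.aestronglyMeasurable, ← map_fst_stepLaw (κ := κ) hW,
    integral_map measurable_fst.aemeasurable hg.aestronglyMeasurable]

lemma setIntegral_fst_preimage_stepLaw [SFinite μ] [IsMarkovKernel κ] (hW : Measurable W)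
    {f : E × E → ℝ} (hf : Integrable f (stepLaw μ κ W)) {t : Set E} (ht : MeasurableSet t) :
    ∫ p in Prod.fst ⁻¹' t, f p ∂stepLaw μ κ W = ∫ x in W ⁻¹' t, ∫ y, f (W x, W y) ∂κ x ∂μ := by
  have hWW := hW.prodMap hW
  have hpre : Prod.map W W ⁻¹' (Prod.fst ⁻¹' t) = (W ⁻¹' t) ×ˢ Set.univ := by ext; simp
  have hfW : Integrable (fun p : Ω × Ω => f (Prod.map W W p)) (μ ⊗ₘ κ) := hf.comp_measurable hWW
  rw [stepLaw, setIntegral_map (measurable_fst ht) hf.1 hWW.aemeasurable, hpre,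
    Measure.setIntegral_compProd (hW ht) .univ hfW.integrableOn]
  simp only [Measure.restrict_univ, Prod.map_apply]

lemma condExp_stepLaw_fst [IsFiniteMeasure μ] [IsMarkovKernel κ] (hW : Measurable W)
    {f : E × E → ℝ} (hf : Integrable f (stepLaw μ κ W)) {g : E → ℝ} (hg : Measurable g)
    (hfg : ∀ x, ∫ y, f (W x, W y) ∂κ x = g (W x)) :
    (stepLaw μ κ W)[f | MeasurableSpace.comap Prod.fst ‹_›] =ᵐ[stepLaw μ κ W]
      fun p => g p.1 := by
  have hgW : Integrable (g ∘ W) μ :=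
    (Integrable.integral_compProd (κ := Kernel.const Unit μ) (η := Kernel.prodMkLeft Unit κ)
      (a := ()) (hf.comp_measurable (hW.prodMap hW))).congr (.of_forall hfg)
  have hgint : Integrable (fun p : E × E => g p.1) (stepLaw μ κ W) := by
    refine Integrable.comp_measurable (g := g) ?_ measurable_fst
    rwa [map_fst_stepLaw hW, integrable_map_measure hg.aestronglyMeasurable hW.aemeasurable]
  have : IsFiniteMeasure (stepLaw μ κ W) := by unfold stepLaw; infer_instance
  refine (ae_eq_condExp_of_forall_setIntegral_eq measurable_fst.comap_le hf
    (fun _ _ _ => hgint.integrableOn) ?_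
    (hg.comp (comap_measurable Prod.fst)).aestronglyMeasurable).symm
  rintro _ ⟨t, ht, rfl⟩ -
  rw [setIntegral_fst_preimage_stepLaw hW hgint ht, setIntegral_fst_preimage_stepLaw hW hf ht]
  simp only [hfg, integral_const, probReal_univ, one_smul]

lemma two_mul_integral_mul_integral_sub [IsFiniteMeasure μ] [IsMarkovKernel κ]
    (hκ : κ.IsReversible μ) {W : Ω → ℝ} (hW : MemLp W 2 μ) :
    2 * ∫ x, W x * ∫ y, (W x - W y) ∂κ x ∂μ = ∫ x, ∫ y, (W x - W y) ^ 2 ∂κ x ∂μ := by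
  have hfst : MemLp (fun p : Ω × Ω => W p.1) 2 (μ ⊗ₘ κ) :=
    hW.comp_measurePreserving ⟨measurable_fst, Measure.fst_compProd μ κ⟩
  have hswap : MeasurePreserving Prod.swap (μ ⊗ₘ κ) (μ ⊗ₘ κ) :=
    ⟨measurable_swap, map_swap_compProd_of_isReversible hκ⟩
  have hsnd : MemLp (fun p : Ω × Ω => W p.2) 2 (μ ⊗ₘ κ) := hfst.comp_measurePreserving hswap
  have hsub := hfst.sub hsnd
  have hl : Integrable (fun p : Ω × Ω => W p.1 * (W p.1 - W p.2)) (μ ⊗ₘ κ) :=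
    hfst.integrable_mul hsub
  have hr : Integrable (fun p : Ω × Ω => W p.2 * (W p.1 - W p.2)) (μ ⊗ₘ κ) :=
    hsnd.integrable_mul hsub
  have hexch : ∫ p, W p.2 * (W p.1 - W p.2) ∂(μ ⊗ₘ κ)
      = -∫ p, W p.1 * (W p.1 - W p.2) ∂(μ ⊗ₘ κ) := by
    rw [← integral_neg, ← hswap.integral_comp MeasurableEquiv.prodComm.measurableEmbedding]
    exact integral_congr_ae (.of_forall fun p => by simp only [Prod.fst_swap, Prod.snd_swap]; ring)
  calc 2 * ∫ x, W x * ∫ y, (W x - W y) ∂κ x ∂μ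
      = 2 * ∫ p, W p.1 * (W p.1 - W p.2) ∂(μ ⊗ₘ κ) := by
        rw [Measure.integral_compProd hl]
        simp only [integral_const_mul]
    _ = ∫ p, W p.1 * (W p.1 - W p.2) ∂(μ ⊗ₘ κ) - ∫ p, W p.2 * (W p.1 - W p.2) ∂(μ ⊗ₘ κ) := by
        rw [hexch]; ring
    _ = ∫ p, (W p.1 - W p.2) ^ 2 ∂(μ ⊗ₘ κ) := by
        rw [← integral_sub hl hr]
        exact integral_congr_ae (.of_forall fun p => by ring)
    _ = ∫ x, ∫ y, (W x - W y) ^ 2 ∂κ x ∂μ :=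
        Measure.integral_compProd hsub.integrable_sq

end ReversibleKernel

section Glauber

variable {α : Type*} [Fintype α]

/-- The partition function of the energy `H`, with the sign convention that the weight of `x` is
`exp (H x)`. -/
noncomputable def partitionFunction (H : α → ℝ) : ℝ := ∑ x, exp (H x)

lemma partitionFunction_pos [Nonempty α] (H : α → ℝ) : 0 < partitionFunction H :=
  Finset.sum_pos (fun _ _ => exp_pos _) Finset.univ_nonempty

lemma sum_ofReal_exp (H : α → ℝ) :
    ∑ x, ENNReal.ofReal (exp (H x)) = ENNReal.ofReal (partitionFunction H) :=
  (ENNReal.ofReal_sum_of_nonneg fun _ _ => (exp_pos _).le).symm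

variable [MeasurableSpace α]

/-- The Gibbs measure of the energy `H`: the probability of `x` is proportional to `exp (H x)`. -/
noncomputable def gibbsMeasure (H : α → ℝ) : Measure α :=
  (∑ x, ENNReal.ofReal (exp (H x)))⁻¹ • ∑ x, ENNReal.ofReal (exp (H x)) • Measure.dirac x

instance isProbabilityMeasure_gibbsMeasure [Nonempty α] (H : α → ℝ) :
    IsProbabilityMeasure (gibbsMeasure H) := by
  have hZ : ∑ x, ENNReal.ofReal (exp (H x)) ≠ 0 := by
    simpa [sum_ofReal_exp] using partitionFunction_pos H
  refine ⟨?_⟩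
  simpa [gibbsMeasure] using ENNReal.inv_mul_cancel hZ (by simp [sum_ofReal_exp])

variable [MeasurableSingletonClass α]

lemma lintegral_gibbsMeasure (H : α → ℝ) (f : α → ENNReal) :
    ∫⁻ x, f x ∂gibbsMeasure H
      = (∑ x, ENNReal.ofReal (exp (H x)))⁻¹ * ∑ x, ENNReal.ofReal (exp (H x)) * f x := by
  simp [gibbsMeasure]

lemma integral_gibbsMeasure [Nonempty α] (H f : α → ℝ) :
    ∫ x, f x ∂gibbsMeasure H = (∑ x, exp (H x) * f x) / partitionFunction H := by
  rw [gibbsMeasure, sum_ofReal_exp, integral_smul_measure,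
    integral_finsetSum_measure fun _ _ => Integrable.of_finite.smul_measure ENNReal.ofReal_ne_top]
  simp [integral_smul_measure, (partitionFunction_pos H).le, (exp_pos _).le, div_eq_inv_mul]

variable {ι : Type*} [DecidableEq ι]

/-- The configuration obtained from `x` by flipping the spin at site `i`. -/
def flipSpin (i : ι) (x : ι → Bool) : ι → Bool := Function.update x i (!x i)

lemma flipSpin_involutive (i : ι) : Function.Involutive (flipSpin i) := fun x => by
  simp [flipSpin]

/-- The probability that resampling the spin of `x` at site `i` from its conditional law under the
Gibbs measure, given all other spins, flips it. -/
noncomputable def flipProbAt (H : (ι → Bool) → ℝ) (i : ι) (x : ι → Bool) : ℝ :=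
  sigmoid (H (flipSpin i x) - H x)

lemma exp_mul_sigmoid_sub_comm (a b : ℝ) :
    exp a * sigmoid (b - a) = exp b * sigmoid (a - b) := by
  rw [← neg_sub b a, ← sigmoid_mul_rexp_neg, mul_left_comm, ← exp_add, mul_comm]
  congr 2
  ring

lemma exp_mul_flipProbAt_flipSpin (H : (ι → Bool) → ℝ) (i : ι) (x : ι → Bool) :
    exp (H (flipSpin i x)) * flipProbAt H i (flipSpin i x) = exp (H x) * flipProbAt H i x := by
  rw [flipProbAt, flipSpin_involutive i x, flipProbAt, exp_mul_sigmoid_sub_comm]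

variable [Fintype ι]

/-- One step of the Glauber dynamics for the energy `H`: a uniformly chosen spin is resampled from
its conditional law given all other spins. -/
noncomputable def glauberKernel (H : (ι → Bool) → ℝ) : Kernel (ι → Bool) (ι → Bool) where
  toFun x := (Fintype.card ι : ENNReal)⁻¹ • ∑ i,
    (ENNReal.ofReal (flipProbAt H i x) • Measure.dirac (flipSpin i x) +
      ENNReal.ofReal (1 - flipProbAt H i x) • Measure.dirac x)
  measurable' := .of_discrete

lemma lintegral_glauberKernel (H : (ι → Bool) → ℝ) (x : ι → Bool) (f : (ι → Bool) → ENNReal) :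
    ∫⁻ y, f y ∂glauberKernel H x = (Fintype.card ι : ENNReal)⁻¹ * ∑ i,
      (ENNReal.ofReal (flipProbAt H i x) * f (flipSpin i x) +
        ENNReal.ofReal (1 - flipProbAt H i x) * f x) := by
  simp [glauberKernel]

lemma integral_glauberKernel (H : (ι → Bool) → ℝ) (x : ι → Bool) (f : (ι → Bool) → ℝ) :
    ∫ y, f y ∂glauberKernel H x = (Fintype.card ι : ℝ)⁻¹ * ∑ i,
      (flipProbAt H i x * f (flipSpin i x) + (1 - flipProbAt H i x) * f x) := by
  have h0 (i : ι) : 0 ≤ flipProbAt H i x := sigmoid_nonneg _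
  have h1 (i : ι) : 0 ≤ 1 - flipProbAt H i x := sub_nonneg.2 (sigmoid_le_one _)
  have hint (c : ℝ) (z : ι → Bool) : Integrable f (ENNReal.ofReal c • Measure.dirac z) :=
    Integrable.of_finite.smul_measure ENNReal.ofReal_ne_top
  change ∫ y, f y ∂((Fintype.card ι : ENNReal)⁻¹ • ∑ i, (_ : Measure (ι → Bool))) = _
  rw [integral_smul_measure,
    integral_finsetSum_measure fun _ _ => (hint _ _).add_measure (hint _ _)]
  simp [integral_add_measure (hint _ _) (hint _ _), h0, h1]

instance isMarkovKernel_glauberKernel [Nonempty ι] (H : (ι → Bool) → ℝ) :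
    IsMarkovKernel (glauberKernel H) := by
  refine ⟨fun x => ⟨?_⟩⟩
  have hsum (i : ι) :
      ENNReal.ofReal (flipProbAt H i x) + ENNReal.ofReal (1 - flipProbAt H i x) = 1 := by
    rw [flipProbAt, ← ENNReal.ofReal_add (sigmoid_nonneg _) (sub_nonneg.2 (sigmoid_le_one _)),
      add_sub_cancel, ENNReal.ofReal_one]
  rw [← lintegral_one, lintegral_glauberKernel]
  simp only [mul_one, hsum, Finset.sum_const, Finset.card_univ, nsmul_eq_mul]
  exact ENNReal.inv_mul_cancel (by simp) (by simp)

lemma ae_glauberKernel_of_forall (H : (ι → Bool) → ℝ) {x : ι → Bool} {p : (ι → Bool) → Prop}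
    (hx : p x) (hflip : ∀ i, p (flipSpin i x)) : ∀ᵐ y ∂glauberKernel H x, p y := by
  rw [ae_iff, ← lintegral_indicator_one .of_discrete, lintegral_glauberKernel]
  simp [hx, hflip]

lemma sum_exp_mul_flipProbAt_comm (H : (ι → Bool) → ℝ) (i : ι) (f g : (ι → Bool) → ENNReal) :
    ∑ x, ENNReal.ofReal (exp (H x)) *
        (f x * (ENNReal.ofReal (flipProbAt H i x) * g (flipSpin i x)))
      = ∑ x, ENNReal.ofReal (exp (H x)) *
        (g x * (ENNReal.ofReal (flipProbAt H i x) * f (flipSpin i x))) := by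
  rw [← Equiv.sum_comp (flipSpin_involutive i).toPerm]
  refine Finset.sum_congr rfl fun x _ => ?_
  have hbal : ENNReal.ofReal (exp (H (flipSpin i x))) *
        ENNReal.ofReal (flipProbAt H i (flipSpin i x))
      = ENNReal.ofReal (exp (H x)) * ENNReal.ofReal (flipProbAt H i x) := by
    rw [← ENNReal.ofReal_mul (exp_pos _).le, exp_mul_flipProbAt_flipSpin,
      ENNReal.ofReal_mul (exp_pos _).le]
  simp only [Function.Involutive.coe_toPerm, flipSpin_involutive i x]
  calc _ = ENNReal.ofReal (exp (H (flipSpin i x))) *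
        ENNReal.ofReal (flipProbAt H i (flipSpin i x)) * (f (flipSpin i x) * g x) := by ring
    _ = _ := by rw [hbal]; ring

lemma isReversible_glauberKernel (H : (ι → Bool) → ℝ) :
    (glauberKernel H).IsReversible (gibbsMeasure H) := by
  have hstep (f g : (ι → Bool) → ENNReal) :
      ∫⁻ x, f x * ∫⁻ y, g y ∂glauberKernel H x ∂gibbsMeasure H
      = (∑ x, ENNReal.ofReal (exp (H x)))⁻¹ * ((Fintype.card ι : ENNReal)⁻¹ * ∑ i,
        (∑ x, ENNReal.ofReal (exp (H x)) *
            (f x * (ENNReal.ofReal (flipProbAt H i x) * g (flipSpin i x))) +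
          ∑ x, ENNReal.ofReal (exp (H x)) *
            (f x * (ENNReal.ofReal (1 - flipProbAt H i x) * g x)))) := by
    simp only [lintegral_gibbsMeasure, lintegral_glauberKernel, ← Finset.sum_add_distrib]
    congr 1
    rw [Finset.sum_comm, Finset.mul_sum]
    refine Finset.sum_congr rfl fun x _ => ?_
    simp only [← mul_add, ← Finset.mul_sum]
    ring
  have hind (A B : Set (ι → Bool)) : ∫⁻ x in A, glauberKernel H x B ∂gibbsMeasure H
      = ∫⁻ x, A.indicator 1 x * ∫⁻ y, B.indicator 1 y ∂glauberKernel H x ∂gibbsMeasure H := by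
    rw [← lintegral_indicator .of_discrete]
    congr! 2 with x
    by_cases hx : x ∈ A <;> simp [hx, lintegral_indicator_one .of_discrete]
  intro A B _ _
  rw [hind, hind, hstep, hstep]
  congr! 4 with i
  · exact sum_exp_mul_flipProbAt_comm H i _ _
  · exact Finset.sum_congr rfl fun x _ => by ring

end Glauber

section MeanField

/-- The mean-field energy of a configuration of `n` spins, with energy density `h` as a function of
the magnetization per particle. -/
noncomputable def meanFieldEnergy (h : ℝ → ℝ) (n : ℕ) (x : Fin n → Bool) : ℝ :=
  n * h (magPP n x)

/-- The probability that resampling a spin `s = ±1` flips it, in a configuration of magnetization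
per particle `m`; the flip changes the magnetization to `m - 2 * s / n`. -/
noncomputable def flipRate (h : ℝ → ℝ) (n : ℕ) (m s : ℝ) : ℝ :=
  sigmoid (n * (h (m - 2 * s / n) - h m))

/-- The expected decrease of the total magnetization in one Glauber step started from a
configuration of magnetization per particle `m`. -/
noncomputable def drift (h : ℝ → ℝ) (n : ℕ) (m : ℝ) : ℝ :=
  (1 + m) * flipRate h n m 1 - (1 - m) * flipRate h n m (-1)

/-- The probability that one Glauber step started from a configuration of magnetization per
particle `m` flips a spin. -/
noncomputable def flipProb (h : ℝ → ℝ) (n : ℕ) (m : ℝ) : ℝ :=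
  (1 + m) / 2 * flipRate h n m 1 + (1 - m) / 2 * flipRate h n m (-1)

lemma abs_spin (b : Bool) : |spin b| = 1 := by cases b <;> simp [spin]

lemma spin_not (b : Bool) : spin (!b) = -spin b := by cases b <;> simp [spin]

variable {n : ℕ}

lemma magPP_mem_Icc (x : Fin n → Bool) : magPP n x ∈ Set.Icc (-1) 1 := by
  rw [Set.mem_Icc, ← abs_le, magPP, abs_div, Nat.abs_cast]
  refine div_le_one_of_le₀ ((Finset.abs_sum_le_sum_abs _ _).trans ?_) n.cast_nonneg
  simp [abs_spin]

lemma totalMag_sub_totalMag_flipSpin (i : Fin n) (x : Fin n → Bool) :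
    totalMag n x - totalMag n (flipSpin i x) = 2 * spin (x i) := by
  rw [totalMag, totalMag, ← Finset.sum_sub_distrib,
    Fintype.sum_eq_single i fun j hj => by simp [flipSpin, hj]]
  simp [flipSpin, spin_not]
  ring

lemma flipProbAt_meanFieldEnergy (h : ℝ → ℝ) (i : Fin n) (x : Fin n → Bool) :
    flipProbAt (meanFieldEnergy h n) i x = flipRate h n (magPP n x) (spin (x i)) := by
  have hm : magPP n (flipSpin i x) = magPP n x - 2 * spin (x i) / n := by
    rw [← totalMag_sub_totalMag_flipSpin, magPP, magPP]; ring
  rw [flipProbAt, flipRate, meanFieldEnergy, meanFieldEnergy, hm, mul_sub]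

lemma ae_abs_totalMag_sub_le (h : ℝ → ℝ) (x : Fin n → Bool) :
    ∀ᵐ y ∂glauberKernel (meanFieldEnergy h n) x, |totalMag n x - totalMag n y| ≤ 2 :=
  ae_glauberKernel_of_forall _ (by simp) fun i => by
    simp [totalMag_sub_totalMag_flipSpin, abs_mul, abs_spin]

variable [NeZero n] (h : ℝ → ℝ) (x : Fin n → Bool)

lemma sum_apply_spin (G : ℝ → ℝ) :
    ∑ i, G (spin (x i)) = n * ((1 + magPP n x) / 2 * G 1 + (1 - magPP n x) / 2 * G (-1)) := by
  have hG (b : Bool) : G (spin b) = (G 1 + G (-1)) / 2 + spin b * ((G 1 - G (-1)) / 2) := by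
    cases b <;> simp [spin] <;> ring
  have hn : (n : ℝ) ≠ 0 := NeZero.ne _
  simp only [hG, Finset.sum_add_distrib, ← Finset.sum_mul, magPP, totalMag, Finset.sum_const,
    Finset.card_univ, Fintype.card_fin, nsmul_eq_mul]
  field_simp
  ring

lemma integral_glauberKernel_totalMag_sub (G : ℝ → ℝ) (hG : G 0 = 0) :
    ∫ y, G (totalMag n x - totalMag n y) ∂glauberKernel (meanFieldEnergy h n) x
      = (1 + magPP n x) / 2 * flipRate h n (magPP n x) 1 * G 2
        + (1 - magPP n x) / 2 * flipRate h n (magPP n x) (-1) * G (-2) := by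
  rw [integral_glauberKernel]
  simp only [flipProbAt_meanFieldEnergy, totalMag_sub_totalMag_flipSpin, sub_self, hG, mul_zero,
    add_zero, Fintype.card_fin]
  rw [sum_apply_spin x fun s => flipRate h n (magPP n x) s * G (2 * s),
    inv_mul_cancel_left₀ (NeZero.ne _)]
  ring_nf

lemma integral_totalMag_sub :
    ∫ y, (totalMag n x - totalMag n y) ∂glauberKernel (meanFieldEnergy h n) x
      = drift h n (magPP n x) := by
  rw [integral_glauberKernel_totalMag_sub h x (fun s => s) rfl, drift]
  ring

lemma integral_totalMag_sub_sq :
    ∫ y, (totalMag n x - totalMag n y) ^ 2 ∂glauberKernel (meanFieldEnergy h n) x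
      = 4 * flipProb h n (magPP n x) := by
  rw [integral_glauberKernel_totalMag_sub h x (fun s => s ^ 2) (by norm_num), flipProb]
  ring

end MeanField

section Asymptotics

/-- The limit of `drift h n m` as `n → ∞`. -/
noncomputable def limitDrift (h : ℝ → ℝ) (m : ℝ) : ℝ := 1 + m - 2 * sigmoid (2 * deriv h m)

/-- The limit of `flipProb h n m` as `n → ∞`. -/
noncomputable def limitFlipProb (h : ℝ → ℝ) (m : ℝ) : ℝ :=
  (1 + m) / 2 - m * sigmoid (2 * deriv h m)

variable {h : ℝ → ℝ} {a : ℝ}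

lemma exists_abs_flipRate_sub_le (hh : ContDiff ℝ 2 h) :
    ∃ C, 0 ≤ C ∧ ∀ (n : ℕ) [NeZero n], ∀ m ∈ Set.Icc (-1) 1, ∀ s ∈ Set.Icc (-1) 1,
      |flipRate h n m s - sigmoid (-(2 * s * deriv h m))| ≤ C / n := by
  obtain ⟨C, hC, hTaylor⟩ :=
    exists_abs_taylor_one_remainder_le hh isCompact_Icc (convex_Icc (-3 : ℝ) 3)
  refine ⟨4 * C, by positivity, fun n _ m hm s hs => ?_⟩
  have hn : (1 : ℝ) ≤ n := Nat.one_le_cast.2 NeZero.one_le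
  have hstep : |2 * s / n| ≤ 2 := by
    rw [abs_div, Nat.abs_cast, abs_mul, abs_two]
    exact (div_le_self (by positivity) hn).trans (by linarith [abs_le.2 hs])
  have hmem : m - 2 * s / n ∈ Set.Icc (-3) 3 :=
    ⟨by linarith [hm.1, (abs_le.1 hstep).2], by linarith [hm.2, (abs_le.1 hstep).1]⟩
  have hs2 : s ^ 2 ≤ 1 := (sq_le_one_iff_abs_le_one s).2 (abs_le.2 hs)
  calc |flipRate h n m s - sigmoid (-(2 * s * deriv h m))|
      ≤ |n * (h (m - 2 * s / n) - h m) - -(2 * s * deriv h m)| := by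
        simpa only [NNReal.coe_one, one_mul, Real.dist_eq, flipRate] using
          lipschitzWith_sigmoid.dist_le_mul (n * (h (m - 2 * s / n) - h m)) _
    _ = n * |h (m - 2 * s / n) - h m - deriv h m * (m - 2 * s / n - m)| := by
        rw [← abs_of_nonneg (zero_le_one.trans hn), ← abs_mul, abs_of_nonneg (zero_le_one.trans hn)]
        congr 1
        field_simp
        ring
    _ ≤ n * (C * (m - 2 * s / n - m) ^ 2) := by
        gcongr
        exact hTaylor m ⟨by linarith [hm.1], by linarith [hm.2]⟩ _ hmem
    _ = 4 * C * s ^ 2 / n := by field_simp; ring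
    _ ≤ 4 * C / n :=
        div_le_div_of_nonneg_right (mul_le_of_le_one_right (by positivity) hs2) n.cast_nonneg

lemma exists_abs_sub_limitDrift_le_and_abs_sub_limitFlipProb_le (hh : ContDiff ℝ 2 h) :
    ∃ C, 0 ≤ C ∧ ∀ (n : ℕ) [NeZero n], ∀ m ∈ Set.Icc (-1) 1,
      |drift h n m - limitDrift h m| ≤ C / n ∧ |flipProb h n m - limitFlipProb h m| ≤ C / n := by
  obtain ⟨C, hC, hrate⟩ := exists_abs_flipRate_sub_le hh
  refine ⟨2 * C, by positivity, fun n _ m hm => ?_⟩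
  have hplus := hrate n m hm 1 (by norm_num)
  have hminus := hrate n m hm (-1) (by norm_num)
  rw [show -(2 * 1 * deriv h m) = -(2 * deriv h m) by ring, sigmoid_neg] at hplus
  rw [show -(2 * -1 * deriv h m) = 2 * deriv h m by ring] at hminus
  have hm0 : 0 ≤ 1 + m := by linarith [hm.1]
  have hm1 : 0 ≤ 1 - m := by linarith [hm.2]
  set e₁ := flipRate h n m 1 - (1 - sigmoid (2 * deriv h m))
  set e₂ := flipRate h n m (-1) - sigmoid (2 * deriv h m)
  have hsum : |(1 + m) * e₁| + |(1 - m) * e₂| ≤ 2 * C / n := by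
    rw [abs_mul, abs_mul, abs_of_nonneg hm0, abs_of_nonneg hm1]
    calc (1 + m) * |e₁| + (1 - m) * |e₂| ≤ (1 + m) * (C / n) + (1 - m) * (C / n) := by gcongr
      _ = 2 * C / n := by ring
  constructor
  · calc |drift h n m - limitDrift h m| = |(1 + m) * e₁ - (1 - m) * e₂| := by
          simp only [drift, limitDrift, e₁, e₂]; ring_nf
      _ ≤ 2 * C / n := (abs_sub _ _).trans hsum
  · calc |flipProb h n m - limitFlipProb h m| = |((1 + m) * e₁ + (1 - m) * e₂) / 2| := by
          simp only [flipProb, limitFlipProb, e₁, e₂]; ring_nf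
      _ = |(1 + m) * e₁ + (1 - m) * e₂| / 2 := by rw [abs_div, abs_two]
      _ ≤ |(1 + m) * e₁ + (1 - m) * e₂| := half_le_self (abs_nonneg _)
      _ ≤ 2 * C / n := (abs_add_le _ _).trans hsum

lemma contDiff_limitDrift (hh : ContDiff ℝ 3 h) : ContDiff ℝ 2 (limitDrift h) := by
  have hsigmoid : ContDiff ℝ 2 sigmoid := contDiff_sigmoid.of_le le_top
  unfold limitDrift
  fun_prop

lemma contDiff_limitFlipProb (hh : ContDiff ℝ 2 h) : ContDiff ℝ 1 (limitFlipProb h) := by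
  have hsigmoid : ContDiff ℝ 1 sigmoid := contDiff_sigmoid.of_le le_top
  unfold limitFlipProb
  fun_prop

lemma deriv_limitDrift (hh : ContDiff ℝ 2 h) (ha : sigmoid (2 * deriv h a) = (1 + a) / 2) :
    deriv (limitDrift h) a = 1 - (1 - a ^ 2) * deriv (deriv h) a := by
  have hh' : ContDiff ℝ 1 (deriv h) := ContDiff.deriv' hh
  have hd : HasDerivAt (fun m => 2 * deriv h m) (2 * deriv (deriv h) a) a :=
    ((hh'.differentiable one_ne_zero a).hasDerivAt).const_mul 2
  have := (((hasDerivAt_id a).const_add 1).fun_sub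
    (((hasDerivAt_sigmoid _).comp a hd).const_mul 2)).deriv
  rw [ha] at this
  refine this.trans ?_
  ring

lemma exists_abs_drift_sub_le_of_sigmoid_eq (hh : ContDiff ℝ 3 h) (ha : a ∈ Set.Icc (-1) 1)
    (hcrit : sigmoid (2 * deriv h a) = (1 + a) / 2) :
    ∃ C, 0 ≤ C ∧ ∀ (n : ℕ) [NeZero n], ∀ m ∈ Set.Icc (-1) 1,
      |drift h n m - (1 - (1 - a ^ 2) * deriv (deriv h) a) * (m - a)|
        ≤ C * (1 / n + (m - a) ^ 2) := by
  have hh2 : ContDiff ℝ 2 h := hh.of_le (by norm_num)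
  obtain ⟨C, hC, hdrift⟩ := exists_abs_sub_limitDrift_le_and_abs_sub_limitFlipProb_le hh2
  obtain ⟨D, hD, hTaylor⟩ :=
    exists_abs_taylor_one_remainder_le (contDiff_limitDrift hh) isCompact_Icc (convex_Icc (-1) 1)
  refine ⟨C + D, by positivity, fun n _ m hm => ?_⟩
  have hlim := hTaylor a ha m hm
  rw [deriv_limitDrift hh2 hcrit, show limitDrift h a = 0 by rw [limitDrift, hcrit]; ring,
    sub_zero] at hlim
  calc |drift h n m - (1 - (1 - a ^ 2) * deriv (deriv h) a) * (m - a)|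
      ≤ C / n + D * (m - a) ^ 2 :=
        (abs_sub_le _ (limitDrift h m) _).trans (add_le_add (hdrift n m hm).1 hlim)
    _ ≤ (C + D) * (1 / n + (m - a) ^ 2) := by
        have : 0 ≤ C * (m - a) ^ 2 + D * (1 / n) := by positivity
        linear_combination this

lemma exists_abs_flipProb_sub_le_of_sigmoid_eq (hh : ContDiff ℝ 2 h) (ha : a ∈ Set.Icc (-1) 1)
    (hcrit : sigmoid (2 * deriv h a) = (1 + a) / 2) :
    ∃ C, 0 ≤ C ∧ ∀ (n : ℕ) [NeZero n], ∀ m ∈ Set.Icc (-1) 1,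
      |flipProb h n m - (1 - a ^ 2) / 2| ≤ C * (1 / n + |m - a|) := by
  obtain ⟨C, hC, hprob⟩ := exists_abs_sub_limitDrift_le_and_abs_sub_limitFlipProb_le hh
  obtain ⟨D, hD, hlip⟩ :=
    exists_abs_sub_le_of_contDiff (contDiff_limitFlipProb hh) isCompact_Icc (convex_Icc (-1) 1)
  refine ⟨C + D, by positivity, fun n _ m hm => ?_⟩
  have hlim := hlip a ha m hm
  rw [show limitFlipProb h a = (1 - a ^ 2) / 2 by rw [limitFlipProb, hcrit]; ring] at hlim
  calc |flipProb h n m - (1 - a ^ 2) / 2| ≤ C / n + D * |m - a| :=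
        (abs_sub_le _ (limitFlipProb h m) _).trans (add_le_add (hprob n m hm).2 hlim)
    _ ≤ (C + D) * (1 / n + |m - a|) := by
        have : 0 ≤ C * |m - a| + D * (1 / n) := by positivity
        linear_combination this

end Asymptotics

section FreeEnergy

/-- The mean-field free energy of a model with energy density `h`, as a function of the
magnetization per particle; `phiKJ` is the cubic case. -/
noncomputable def freeEnergy (h : ℝ → ℝ) (m : ℝ) : ℝ := binEnt m - h m

lemma binEnt_eq_neg_binEntropy (m : ℝ) : binEnt m = -binEntropy ((1 + m) / 2) := by
  rw [binEnt, binEntropy, show 1 - (1 + m) / 2 = (1 - m) / 2 by ring, log_inv, log_inv]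
  ring

lemma continuous_freeEnergy {h : ℝ → ℝ} (hh : Continuous h) : Continuous (freeEnergy h) := by
  unfold freeEnergy
  simp only [binEnt_eq_neg_binEntropy]
  fun_prop

variable {h : ℝ → ℝ} {a : ℝ}

lemma hasDerivAt_freeEnergy (hh : Differentiable ℝ h) (ha : a ∈ Set.Ioo (-1) 1) :
    HasDerivAt (freeEnergy h) ((log ((1 + a) / 2) - log ((1 - a) / 2)) / 2 - deriv h a) a := by
  have hp : HasDerivAt (fun m : ℝ => (1 + m) / 2) (1 / 2) a :=
    ((hasDerivAt_id a).const_add 1).div_const 2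
  have hS : HasDerivAt binEnt ((log ((1 + a) / 2) - log ((1 - a) / 2)) / 2) a := by
    rw [funext binEnt_eq_neg_binEntropy]
    refine ((hasDerivAt_binEntropy (by linarith [ha.1]) (by linarith [ha.2])).comp a hp).fun_neg
      |>.congr_deriv ?_
    rw [show 1 - (1 + a) / 2 = (1 - a) / 2 by ring]
    ring
  exact hS.sub (hh a).hasDerivAt

lemma iteratedDeriv_two_freeEnergy (hh : ContDiff ℝ 2 h) (ha : a ∈ Set.Ioo (-1) 1) :
    iteratedDeriv 2 (freeEnergy h) a = 1 / (1 - a ^ 2) - deriv (deriv h) a := by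
  have hpos : 0 < 1 + a := by linarith [ha.1]
  have hneg : 0 < 1 - a := by linarith [ha.2]
  have hderiv : deriv (freeEnergy h) =ᶠ[nhds a]
      fun m => (log ((1 + m) / 2) - log ((1 - m) / 2)) / 2 - deriv h m := by
    filter_upwards [Ioo_mem_nhds ha.1 ha.2] with m hm
    exact (hasDerivAt_freeEnergy (hh.differentiable two_ne_zero) hm).deriv
  have hlog_add : HasDerivAt (fun m : ℝ => log ((1 + m) / 2)) (1 / 2 / ((1 + a) / 2)) a :=
    (((hasDerivAt_id a).const_add 1).div_const 2).log (by positivity)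
  have hlog_sub : HasDerivAt (fun m : ℝ => log ((1 - m) / 2)) (-1 / 2 / ((1 - a) / 2)) a :=
    (((hasDerivAt_id a).const_sub 1).div_const 2).log (by positivity)
  have hh1 : ContDiff ℝ 1 (deriv h) := ContDiff.deriv' hh
  have hh' : HasDerivAt (deriv h) (deriv (deriv h) a) a :=
    (hh1.differentiable one_ne_zero a).hasDerivAt
  rw [iteratedDeriv_succ, iteratedDeriv_one, hderiv.deriv_eq,
    (((hlog_add.fun_sub hlog_sub).div_const 2).fun_sub hh').deriv,
    show 1 - a ^ 2 = (1 + a) * (1 - a) by ring]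
  field_simp
  ring

lemma deriv_eq_of_isLocalMin_freeEnergy (hh : Differentiable ℝ h) (ha : a ∈ Set.Ioo (-1) 1)
    (hmin : IsLocalMin (freeEnergy h) a) :
    deriv h a = (log ((1 + a) / 2) - log ((1 - a) / 2)) / 2 := by
  linarith [hmin.hasDerivAt_eq_zero (hasDerivAt_freeEnergy hh ha)]

lemma sigmoid_two_mul_deriv_of_isLocalMin (hh : Differentiable ℝ h) (ha : a ∈ Set.Ioo (-1) 1)
    (hmin : IsLocalMin (freeEnergy h) a) : sigmoid (2 * deriv h a) = (1 + a) / 2 := by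
  have hpos : 0 < 1 + a := by linarith [ha.1]
  have hneg : 0 < 1 - a := by linarith [ha.2]
  rw [deriv_eq_of_isLocalMin_freeEnergy hh ha hmin, mul_div_cancel₀ _ two_ne_zero, sigmoid_def,
    neg_sub, exp_sub, exp_log (by positivity), exp_log (by positivity)]
  field_simp
  ring

end FreeEnergy

section Bernstein

open unitInterval

variable {n : ℕ} {p : I}

lemma bernstein_le_one (k : Fin (n + 1)) (p : I) : bernstein n k p ≤ 1 := by
  rw [← bernstein.probability n p]
  exact Finset.single_le_sum (f := fun j : Fin (n + 1) => bernstein n j p)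
    (fun _ _ => bernstein_nonneg) (Finset.mem_univ k)

lemma bernstein_eq_choose_mul_exp (k : Fin (n + 1)) (hp : (p : ℝ) ∈ Set.Ioo 0 1) :
    bernstein n k p = n.choose k * exp (k * log p + (n - k) * log (1 - p)) := by
  have hq : 0 < 1 - (p : ℝ) := sub_pos.2 hp.2
  rw [bernstein_apply, ← Nat.cast_sub k.is_le, exp_add, ← log_pow, ← log_pow,
    exp_log (pow_pos hp.1 _), exp_log (pow_pos hq _), mul_assoc]

lemma choose_le_exp_mul_binEntropy (k : Fin (n + 1)) :
    (n.choose k : ℝ) ≤ exp (n * binEntropy (bernstein.z k)) := by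
  have hone : 1 ≤ exp (n * binEntropy (bernstein.z k)) :=
    one_le_exp <| mul_nonneg n.cast_nonneg <|
      binEntropy_nonneg (bernstein.z k).2.1 (bernstein.z k).2.2
  obtain hk0 | hk0 := Nat.eq_zero_or_pos (k : ℕ)
  · rwa [hk0, Nat.choose_zero_right, Nat.cast_one]
  obtain hkn | hkn := k.is_le.eq_or_lt
  · rwa [hkn, Nat.choose_self, Nat.cast_one]
  have hn : (0 : ℝ) < n := Nat.cast_pos.2 (hk0.trans hkn)
  have hz : (bernstein.z k : ℝ) ∈ Set.Ioo 0 1 :=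
    ⟨div_pos (Nat.cast_pos.2 hk0) hn, (div_lt_one hn).2 (Nat.cast_lt.2 hkn)⟩
  have hle := bernstein_le_one k (bernstein.z k)
  rw [bernstein_eq_choose_mul_exp k hz, ← le_div_iff₀ (exp_pos _), one_div, ← exp_neg] at hle
  refine hle.trans_eq (congrArg exp ?_)
  simp only [binEntropy, bernstein.z, log_inv]
  field_simp
  ring

lemma exp_neg_le_sum_bernstein_mul_exp (hn : n ≠ 0) (p : I) (c : ℝ) :
    exp (-(c * (p * (1 - p) / n)))
      ≤ ∑ k : Fin (n + 1), bernstein n k p * exp (-(c * (p - bernstein.z k : ℝ) ^ 2)) := by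
  have hjensen := convexOn_exp.map_sum_le (t := Finset.univ)
    (w := fun k : Fin (n + 1) => bernstein n k p)
    (p := fun k : Fin (n + 1) => -(c * (p - bernstein.z k : ℝ) ^ 2))
    (fun _ _ => bernstein_nonneg) (bernstein.probability n p) fun _ _ => Set.mem_univ _
  refine le_trans (le_of_eq (congrArg exp ?_)) hjensen
  rw [← bernstein.variance hn p, Finset.mul_sum, ← Finset.sum_neg_distrib]
  exact Finset.sum_congr rfl fun k _ => by simp only [smul_eq_mul]; ring

end Bernstein

section Configurations

variable {n : ℕ} [NeZero n]

lemma magPP_eq_card (x : Fin n → Bool) :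
    magPP n x = 2 * ((Finset.card {i | x i = true} : ℝ) / n) - 1 := by
  have hspin (b : Bool) : spin b = 2 * (if b then 1 else 0) - 1 := by cases b <;> norm_num [spin]
  have hn : (n : ℝ) ≠ 0 := NeZero.ne _
  simp only [magPP, totalMag, hspin, Finset.sum_sub_distrib, ← Finset.mul_sum, Finset.sum_boole,
    Finset.sum_const, Finset.card_univ, Fintype.card_fin, nsmul_eq_mul, mul_one]
  field_simp

lemma sum_apply_magPP (F : ℝ → ℝ) :
    ∑ x : Fin n → Bool, F (magPP n x)
      = ∑ k : Fin (n + 1), n.choose k * F (2 * bernstein.z k - 1) := by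
  have hpowerset := Finset.sum_powerset_apply_card (fun k : ℕ => F (2 * (k / n) - 1))
    (x := (Finset.univ : Finset (Fin n)))
  rw [Finset.card_univ, Fintype.card_fin, Finset.sum_range] at hpowerset
  simp only [nsmul_eq_mul] at hpowerset
  refine Eq.trans ?_ hpowerset
  exact Finset.sum_bij' (fun x _ => Finset.univ.filter fun i => x i)
    (fun s _ i => decide (i ∈ s)) (by simp) (by simp) (by simp) (by simp)
    fun x _ => by rw [magPP_eq_card]

end Configurations

section PartitionFunction

variable {h : ℝ → ℝ} {a : ℝ}

-- Tilting by the Bernstein weights of mean `a` leaves the tangent line of the entropy at `a`.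
lemma choose_mul_exp_eq_bernstein_mul_exp {n : ℕ} [NeZero n] (hh : Differentiable ℝ h)
    (ha : a ∈ Set.Ioo (-1) 1) {p : unitInterval} (hp : (p : ℝ) = (1 + a) / 2)
    (hmin : IsLocalMin (freeEnergy h) a) (k : Fin (n + 1)) :
    n.choose k * exp (n * h (2 * bernstein.z k - 1))
      = exp (-(n * freeEnergy h a)) * (bernstein n k p * exp (n * (h (2 * bernstein.z k - 1) - h a
          - deriv h a * (2 * bernstein.z k - 1 - a)))) := by
  have hp01 : (p : ℝ) ∈ Set.Ioo 0 1 := ⟨by linarith [ha.1], by linarith [ha.2]⟩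
  have hn : (n : ℝ) ≠ 0 := NeZero.ne _
  have hq : 1 - (p : ℝ) = (1 - a) / 2 := by rw [hp]; ring
  rw [bernstein_eq_choose_mul_exp k hp01, mul_left_comm, mul_assoc, ← exp_add, ← exp_add,
    deriv_eq_of_isLocalMin_freeEnergy hh ha hmin, hq, hp]
  congr 2
  simp only [freeEnergy, binEnt, bernstein.z]
  field_simp
  ring

lemma bernstein_mul_exp_le_choose_mul_exp {n : ℕ} [NeZero n] (hh : Differentiable ℝ h)
    (ha : a ∈ Set.Ioo (-1) 1) {p : unitInterval} (hp : (p : ℝ) = (1 + a) / 2)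
    (hmin : IsLocalMin (freeEnergy h) a) {C : ℝ}
    (hC : ∀ m ∈ Set.Icc (-1) 1, |h m - h a - deriv h a * (m - a)| ≤ C * (m - a) ^ 2)
    (k : Fin (n + 1)) :
    exp (-(n * freeEnergy h a))
        * (bernstein n k p * exp (-(4 * C * n * (p - bernstein.z k : ℝ) ^ 2)))
      ≤ n.choose k * exp (n * h (2 * bernstein.z k - 1)) := by
  have hz := (bernstein.z k).2
  have hremainder := neg_le_of_abs_le
    (hC (2 * bernstein.z k - 1) ⟨by linarith [hz.1], by linarith [hz.2]⟩)
  rw [choose_mul_exp_eq_bernstein_mul_exp hh ha hp hmin]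
  gcongr
  refine le_of_eq_of_le ?_ (mul_le_mul_of_nonneg_left hremainder n.cast_nonneg)
  rw [hp]
  ring

lemma exists_exp_neg_le_partitionFunction (hh : ContDiff ℝ 2 h) (ha : a ∈ Set.Ioo (-1) 1)
    (hmin : IsLocalMin (freeEnergy h) a) :
    ∃ C, ∀ (n : ℕ) [NeZero n],
      exp (-(n * freeEnergy h a) - C) ≤ partitionFunction (meanFieldEnergy h n) := by
  obtain ⟨C, -, hTaylor⟩ :=
    exists_abs_taylor_one_remainder_le hh isCompact_Icc (convex_Icc (-1) 1)
  let p : unitInterval := ⟨(1 + a) / 2, by linarith [ha.1], by linarith [ha.2]⟩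
  refine ⟨4 * C * (p * (1 - p)), fun n _ => ?_⟩
  have hn : (n : ℝ) ≠ 0 := NeZero.ne _
  calc exp (-(n * freeEnergy h a) - 4 * C * (p * (1 - p)))
      = exp (-(n * freeEnergy h a)) * exp (-(4 * C * n * (p * (1 - p) / n))) := by
        rw [← exp_add]
        congr 1
        field_simp
        ring
    _ ≤ exp (-(n * freeEnergy h a)) * ∑ k : Fin (n + 1),
          bernstein n k p * exp (-(4 * C * n * (p - bernstein.z k : ℝ) ^ 2)) := by
        gcongr
        exact exp_neg_le_sum_bernstein_mul_exp (NeZero.ne n) p _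
    _ ≤ ∑ k : Fin (n + 1), n.choose k * exp (n * h (2 * bernstein.z k - 1)) := by
        rw [Finset.mul_sum]
        exact Finset.sum_le_sum fun k _ => bernstein_mul_exp_le_choose_mul_exp
          (hh.differentiable two_ne_zero) ha rfl hmin (hTaylor a (Set.Ioo_subset_Icc_self ha)) k
    _ = partitionFunction (meanFieldEnergy h n) := (sum_apply_magPP fun m => exp (n * h m)).symm

lemma sum_exp_meanFieldEnergy_mul_indicator_le {s : Set ℝ} {c : ℝ}
    (hs : ∀ m ∈ Set.Icc (-1) 1, m ∈ s → c ≤ freeEnergy h m) (n : ℕ) [NeZero n] :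
    ∑ x : Fin n → Bool, exp (meanFieldEnergy h n x) * s.indicator 1 (magPP n x)
      ≤ (n + 1) * exp (-(n * c)) := by
  have hterm (k : Fin (n + 1)) : n.choose k * (exp (n * h (2 * bernstein.z k - 1))
      * s.indicator 1 (2 * bernstein.z k - 1 : ℝ)) ≤ exp (-(n * c)) := by
    by_cases hk : (2 * bernstein.z k - 1 : ℝ) ∈ s
    · have hz := (bernstein.z k).2
      have hc := hs _ ⟨by linarith [hz.1], by linarith [hz.2]⟩ hk
      rw [freeEnergy, binEnt_eq_neg_binEntropy, add_sub_cancel,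
        mul_div_cancel_left₀ _ two_ne_zero] at hc
      rw [Set.indicator_of_mem hk, Pi.one_apply, mul_one]
      calc n.choose k * exp (n * h (2 * bernstein.z k - 1))
          ≤ exp (n * binEntropy (bernstein.z k)) * exp (n * h (2 * bernstein.z k - 1)) := by
            gcongr
            exact choose_le_exp_mul_binEntropy k
        _ ≤ exp (-(n * c)) := by
            rw [← exp_add, exp_le_exp, ← mul_add, ← mul_neg]
            gcongr
            linarith
    · simp only [Set.indicator_of_notMem hk, mul_zero]
      positivity
  calc ∑ x : Fin n → Bool, exp (meanFieldEnergy h n x) * s.indicator 1 (magPP n x)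
      = ∑ k : Fin (n + 1), n.choose k * (exp (n * h (2 * bernstein.z k - 1))
          * s.indicator 1 (2 * bernstein.z k - 1 : ℝ)) :=
        sum_apply_magPP fun m => exp (n * h m) * s.indicator 1 m
    _ ≤ (n + 1) * exp (-(n * c)) :=
        (Finset.sum_le_card_nsmul _ _ _ fun k _ => hterm k).trans_eq (by simp)

end PartitionFunction

section Concentration

variable {h : ℝ → ℝ} {a : ℝ}

lemma add_one_mul_exp_neg_le {η : ℝ} (hη : 0 < η) (n : ℕ) [NeZero n] :
    (n + 1) * exp (-(n * η)) ≤ 4 / η ^ 2 / n := by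
  have hn : (1 : ℝ) ≤ n := Nat.one_le_cast.2 NeZero.one_le
  have hexp : (n * η) ^ 2 / 2 ≤ exp (n * η) := by
    have : 0 ≤ n * η := by positivity
    linarith [quadratic_le_exp_of_nonneg this]
  rw [exp_neg, ← div_eq_mul_inv, div_le_iff₀ (exp_pos _)]
  calc (n + 1 : ℝ) ≤ 4 / η ^ 2 / n * ((n * η) ^ 2 / 2) := by field_simp; linarith
    _ ≤ 4 / η ^ 2 / n * exp (n * η) := by gcongr

lemma isLocalMin_freeEnergy (ha : a ∈ Set.Ioo (-1) 1)
    (hmin : ∀ m ∈ Set.Icc (-1) 1, m ≠ a → freeEnergy h a < freeEnergy h m) :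
    IsLocalMin (freeEnergy h) a := by
  filter_upwards [Icc_mem_nhds ha.1 ha.2] with m hm
  obtain rfl | hma := eq_or_ne m a
  exacts [le_rfl, (hmin m hm hma).le]

lemma exists_measureReal_preimage_magPP_le (hh : ContDiff ℝ 2 h) (ha : a ∈ Set.Ioo (-1) 1)
    (hmin : ∀ m ∈ Set.Icc (-1) 1, m ≠ a → freeEnergy h a < freeEnergy h m)
    {s : Set ℝ} (hs : IsClosed s) (has : a ∉ s) :
    ∃ C, 0 ≤ C ∧ ∀ (n : ℕ) [NeZero n],
      (gibbsMeasure (meanFieldEnergy h n)).real (magPP n ⁻¹' s) ≤ C / n := by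
  obtain ⟨c, hc, hcs⟩ := (isCompact_Icc.inter_right hs).exists_forall_le'
    (continuous_freeEnergy hh.continuous).continuousOn
    fun m hm => hmin m hm.1 fun hma => has (hma ▸ hm.2)
  obtain ⟨L, hL⟩ := exists_exp_neg_le_partitionFunction hh ha (isLocalMin_freeEnergy ha hmin)
  refine ⟨exp L * (4 / (c - freeEnergy h a) ^ 2), by positivity, fun n _ => ?_⟩
  have hindicator : (gibbsMeasure (meanFieldEnergy h n)).real (magPP n ⁻¹' s)
      = (∑ x, exp (meanFieldEnergy h n x) * s.indicator 1 (magPP n x))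
        / partitionFunction (meanFieldEnergy h n) := by
    rw [← integral_indicator_one .of_discrete, integral_gibbsMeasure]
    rfl
  calc (gibbsMeasure (meanFieldEnergy h n)).real (magPP n ⁻¹' s)
      ≤ (n + 1) * exp (-(n * c)) / exp (-(n * freeEnergy h a) - L) := by
        rw [hindicator]
        gcongr
        · exact sum_exp_meanFieldEnergy_mul_indicator_le (fun m hm hms => hcs m ⟨hm, hms⟩) n
        · exact hL n
    _ = exp L * ((n + 1) * exp (-(n * (c - freeEnergy h a)))) := by
        rw [mul_div_assoc, ← exp_sub, mul_left_comm, ← exp_add]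
        ring_nf
    _ ≤ exp L * (4 / (c - freeEnergy h a) ^ 2) / n := by
        rw [mul_div_assoc]
        gcongr
        exact add_one_mul_exp_neg_le (sub_pos.2 hc) n

lemma flipProb_le_one (h : ℝ → ℝ) (n : ℕ) {m : ℝ} (hm : m ∈ Set.Icc (-1) 1) :
    flipProb h n m ≤ 1 := by
  have hplus : 0 ≤ (1 + m) / 2 := by linarith [hm.1]
  have hminus : 0 ≤ (1 - m) / 2 := by linarith [hm.2]
  have hrate (s : ℝ) : flipRate h n m s ≤ 1 := sigmoid_le_one _
  calc flipProb h n m ≤ (1 + m) / 2 * 1 + (1 - m) / 2 * 1 :=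
        add_le_add (mul_le_mul_of_nonneg_left (hrate _) hplus)
          (mul_le_mul_of_nonneg_left (hrate _) hminus)
    _ = 1 := by ring

lemma integral_sub_mul_drift_le (h : ℝ → ℝ) (a : ℝ) (n : ℕ) [NeZero n] :
    ∫ x, (magPP n x - a) * drift h n (magPP n x) ∂gibbsMeasure (meanFieldEnergy h n) ≤ 2 / n := by
  have hn : (0 : ℝ) < n := Nat.cast_pos.2 (NeZero.pos n)
  have hmag (x : Fin n → Bool) : totalMag n x - n * a = n * (magPP n x - a) := by
    rw [magPP]; field_simp
  have hpair := two_mul_integral_mul_integral_sub (W := fun x => totalMag n x - n * a)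
    (isReversible_glauberKernel (meanFieldEnergy h n)) .of_discrete
  simp only [sub_sub_sub_cancel_right, integral_totalMag_sub, integral_totalMag_sub_sq] at hpair
  simp only [hmag, mul_assoc (n : ℝ), integral_const_mul] at hpair
  have hflip : ∫ x, flipProb h n (magPP n x) ∂gibbsMeasure (meanFieldEnergy h n) ≤ 1 :=
    (integral_mono .of_finite (integrable_const 1)
      fun x => flipProb_le_one h n (magPP_mem_Icc x)).trans_eq (by simp)
  rw [le_div_iff₀ hn]
  linarith

lemma half_mul_sq_le_mul_add {C r d t ε : ℝ} (hC : 0 ≤ C) (hr : 0 ≤ r) (hε : 0 ≤ ε) (ht : |t| ≤ 2)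
    (hd : |d - r * t| ≤ C * (ε + t ^ 2)) :
    r / 2 * t ^ 2 ≤ t * d + 2 * C * ε + 8 * C * {t | r ≤ 2 * C * |t|}.indicator 1 t := by
  have hcubic : C * |t| * t ^ 2
      ≤ r / 2 * t ^ 2 + 8 * C * {t | r ≤ 2 * C * |t|}.indicator 1 t := by
    by_cases hfar : r ≤ 2 * C * |t|
    · rw [Set.indicator_of_mem (by exact hfar), Pi.one_apply, mul_one]
      have hcube : |t| * t ^ 2 ≤ 8 :=
        calc |t| * t ^ 2 = |t| ^ 3 := by rw [← sq_abs t]; ring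
          _ ≤ 2 ^ 3 := by gcongr
          _ = 8 := by norm_num
      have hquad : 0 ≤ r / 2 * t ^ 2 := by positivity
      linarith [mul_le_mul_of_nonneg_left hcube hC]
    · rw [Set.indicator_of_notMem (by exact hfar), mul_zero, add_zero]
      gcongr
      linarith
  have herror : -(t * (d - r * t)) ≤ 2 * C * ε + C * |t| * t ^ 2 :=
    calc -(t * (d - r * t)) ≤ |t| * |d - r * t| := by rw [← abs_mul]; exact neg_le_abs _
      _ ≤ |t| * (C * (ε + t ^ 2)) := by gcongr
      _ = |t| * (C * ε) + C * |t| * t ^ 2 := by ring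
      _ ≤ 2 * (C * ε) + C * |t| * t ^ 2 := by gcongr
      _ = 2 * C * ε + C * |t| * t ^ 2 := by ring
  linear_combination herror + hcubic

/-- The point `a` is the unique minimizer of the free energy on `[-1, 1]`, and it is interior and
nondegenerate. -/
structure IsNondegenerateMinimizer (h : ℝ → ℝ) (a : ℝ) : Prop where
  mem_Ioo : a ∈ Set.Ioo (-1) 1
  lt_of_ne : ∀ m ∈ Set.Icc (-1) 1, m ≠ a → freeEnergy h a < freeEnergy h m
  iteratedDeriv_pos : 0 < iteratedDeriv 2 (freeEnergy h) a

namespace IsNondegenerateMinimizer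

lemma one_sub_sq_pos (ha : IsNondegenerateMinimizer h a) : 0 < 1 - a ^ 2 := by
  rw [show 1 - a ^ 2 = (1 - a) * (1 + a) by ring]
  exact mul_pos (by linarith [ha.mem_Ioo.2]) (by linarith [ha.mem_Ioo.1])

lemma sigmoid_eq (hh : Differentiable ℝ h) (ha : IsNondegenerateMinimizer h a) :
    sigmoid (2 * deriv h a) = (1 + a) / 2 :=
  sigmoid_two_mul_deriv_of_isLocalMin hh ha.mem_Ioo (isLocalMin_freeEnergy ha.mem_Ioo ha.lt_of_ne)

lemma exists_abs_drift_sub_le (hh : ContDiff ℝ 3 h) (ha : IsNondegenerateMinimizer h a) :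
    ∃ C, 0 ≤ C ∧ ∀ (n : ℕ) [NeZero n], ∀ m ∈ Set.Icc (-1) 1,
      |drift h n m - (1 - a ^ 2) * iteratedDeriv 2 (freeEnergy h) a * (m - a)|
        ≤ C * (1 / n + (m - a) ^ 2) := by
  rw [iteratedDeriv_two_freeEnergy (hh.of_le (by norm_num)) ha.mem_Ioo, mul_sub,
    mul_one_div_cancel ha.one_sub_sq_pos.ne']
  exact exists_abs_drift_sub_le_of_sigmoid_eq hh (Set.Ioo_subset_Icc_self ha.mem_Ioo)
    (ha.sigmoid_eq (hh.differentiable three_ne_zero))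

lemma exists_integral_sq_sub_le (hh : ContDiff ℝ 3 h) (ha : IsNondegenerateMinimizer h a) :
    ∃ C, 0 ≤ C ∧ ∀ (n : ℕ) [NeZero n],
      ∫ x, (magPP n x - a) ^ 2 ∂gibbsMeasure (meanFieldEnergy h n) ≤ C / n := by
  set r := (1 - a ^ 2) * iteratedDeriv 2 (freeEnergy h) a
  have hr : 0 < r := mul_pos ha.one_sub_sq_pos ha.iteratedDeriv_pos
  obtain ⟨C, hC, hdrift⟩ := ha.exists_abs_drift_sub_le hh
  set s := {m | r ≤ 2 * C * |m - a|}
  have hs : IsClosed s := isClosed_le (by fun_prop) (by fun_prop)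
  obtain ⟨D, hD, hfar⟩ := exists_measureReal_preimage_magPP_le (hh.of_le (by norm_num)) ha.mem_Ioo
    ha.lt_of_ne hs (by simp [s, hr])
  refine ⟨2 / r * (2 + 2 * C + 8 * C * D), by positivity, fun n _ => ?_⟩
  set μ := gibbsMeasure (meanFieldEnergy h n)
  have hpoint (x : Fin n → Bool) : r / 2 * (magPP n x - a) ^ 2
      ≤ (magPP n x - a) * drift h n (magPP n x) + 2 * C * (1 / n)
        + 8 * C * (magPP n ⁻¹' s).indicator 1 x := by
    have hm := magPP_mem_Icc x
    have ht : |magPP n x - a| ≤ 2 :=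
      abs_le.2 ⟨by linarith [hm.1, ha.mem_Ioo.2], by linarith [hm.2, ha.mem_Ioo.1]⟩
    exact half_mul_sq_le_mul_add hC hr.le (by positivity) ht (hdrift n _ hm)
  have hintegral : r / 2 * ∫ x, (magPP n x - a) ^ 2 ∂μ
      ≤ ∫ x, (magPP n x - a) * drift h n (magPP n x) ∂μ + 2 * C * (1 / n)
        + 8 * C * μ.real (magPP n ⁻¹' s) := by
    have := integral_mono (μ := μ) .of_finite .of_finite hpoint
    rwa [integral_const_mul, integral_add .of_finite .of_finite,
      integral_add .of_finite .of_finite, integral_const, probReal_univ, one_smul,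
      integral_const_mul, integral_indicator_one .of_discrete] at this
  calc ∫ x, (magPP n x - a) ^ 2 ∂μ
      = 2 / r * (r / 2 * ∫ x, (magPP n x - a) ^ 2 ∂μ) := by field_simp
    _ ≤ 2 / r * (2 / n + 2 * C * (1 / n) + 8 * C * (D / n)) := by
        refine mul_le_mul_of_nonneg_left (hintegral.trans ?_) (by positivity)
        gcongr
        exacts [integral_sub_mul_drift_le h a n, hfar n]
    _ = 2 / r * (2 + 2 * C + 8 * C * D) / n := by ring

lemma exists_integral_abs_sub_le (hh : ContDiff ℝ 3 h) (ha : IsNondegenerateMinimizer h a) :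
    ∃ C, 0 ≤ C ∧ ∀ (n : ℕ) [NeZero n],
      ∫ x, |magPP n x - a| ∂gibbsMeasure (meanFieldEnergy h n) ≤ C / √n := by
  obtain ⟨C, hC, hsq⟩ := ha.exists_integral_sq_sub_le hh
  refine ⟨C + 1, by positivity, fun n _ => ?_⟩
  have hn : 0 < √(n : ℝ) := sqrt_pos.2 (Nat.cast_pos.2 (NeZero.pos n))
  have hamgm (t : ℝ) : |t| ≤ √n * t ^ 2 + 1 / √n := by
    rw [← sub_le_iff_le_add', le_div_iff₀ hn, ← sq_abs t]
    nlinarith [sq_nonneg (√n * |t| - 1)]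
  calc ∫ x, |magPP n x - a| ∂gibbsMeasure (meanFieldEnergy h n)
      ≤ ∫ x, (√n * (magPP n x - a) ^ 2 + 1 / √n) ∂gibbsMeasure (meanFieldEnergy h n) :=
        integral_mono .of_finite .of_finite fun x => hamgm _
    _ = √n * ∫ x, (magPP n x - a) ^ 2 ∂gibbsMeasure (meanFieldEnergy h n) + 1 / √n := by
        rw [integral_add .of_finite .of_finite, integral_const_mul, integral_const, probReal_univ,
          one_smul]
    _ ≤ √n * (C / n) + 1 / √n := by gcongr; exact hsq n
    _ = (C + 1) / √n := by
        nth_rw 2 [← sq_sqrt n.cast_nonneg]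
        field_simp

lemma exists_integral_abs_drift_sub_le (hh : ContDiff ℝ 3 h) (ha : IsNondegenerateMinimizer h a) :
    ∃ C : ℝ, 0 ≤ C ∧ ∀ (n : ℕ) [NeZero n],
      ∫ x, |drift h n (magPP n x) - (1 - a ^ 2) * iteratedDeriv 2 (freeEnergy h) a
        * (magPP n x - a)| ∂gibbsMeasure (meanFieldEnergy h n) ≤ C / n := by
  obtain ⟨C, hC, hdrift⟩ := ha.exists_abs_drift_sub_le hh
  obtain ⟨D, hD, hsq⟩ := ha.exists_integral_sq_sub_le hh
  refine ⟨C * (1 + D), by positivity, fun n _ => ?_⟩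
  refine (integral_mono .of_finite .of_finite fun x => hdrift n _ (magPP_mem_Icc x)).trans ?_
  rw [integral_const_mul, integral_add .of_finite .of_finite, integral_const, probReal_univ,
    one_smul, mul_div_assoc, add_div]
  gcongr
  exact hsq n

lemma exists_integral_abs_flipProb_sub_le (hh : ContDiff ℝ 3 h)
    (ha : IsNondegenerateMinimizer h a) :
    ∃ C : ℝ, 0 ≤ C ∧ ∀ (n : ℕ) [NeZero n],
      ∫ x, |flipProb h n (magPP n x) - (1 - a ^ 2) / 2| ∂gibbsMeasure (meanFieldEnergy h n)
        ≤ C / √n := by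
  obtain ⟨C, hC, hprob⟩ := exists_abs_flipProb_sub_le_of_sigmoid_eq (hh.of_le (by norm_num))
    (Set.Ioo_subset_Icc_self ha.mem_Ioo) (ha.sigmoid_eq (hh.differentiable three_ne_zero))
  obtain ⟨D, hD, habs⟩ := ha.exists_integral_abs_sub_le hh
  refine ⟨C * (1 + D), by positivity, fun n _ => ?_⟩
  have hn : (1 : ℝ) ≤ n := Nat.one_le_cast.2 NeZero.one_le
  refine (integral_mono .of_finite .of_finite fun x => hprob n _ (magPP_mem_Icc x)).trans ?_
  rw [integral_const_mul, integral_add .of_finite .of_finite, integral_const, probReal_univ,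
    one_smul, mul_div_assoc, add_div]
  gcongr
  · exact (sqrt_le_left (by positivity)).2 (le_self_pow₀ hn two_ne_zero)
  · exact habs n

end IsNondegenerateMinimizer

end Concentration

section ExchangeablePair

/-- The total magnetization centred at `n * a` and divided by `σ`. -/
noncomputable def normalizedMag (n : ℕ) (a σ : ℝ) (x : Fin n → Bool) : ℝ :=
  (totalMag n x - n * a) / σ

/-- The joint law of the normalized magnetizations before and after one step of Glauber dynamics
started in equilibrium. -/
noncomputable def glauberPairLaw (h : ℝ → ℝ) (n : ℕ) (a σ : ℝ) : Measure (ℝ × ℝ) :=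
  stepLaw (gibbsMeasure (meanFieldEnergy h n)) (glauberKernel (meanFieldEnergy h n))
    (normalizedMag n a σ)

lemma continuous_flipRate {h : ℝ → ℝ} (hh : Continuous h) (n : ℕ) (s : ℝ) :
    Continuous fun m => flipRate h n m s := by
  unfold flipRate
  fun_prop

lemma continuous_drift {h : ℝ → ℝ} (hh : Continuous h) (n : ℕ) : Continuous (drift h n) := by
  have := continuous_flipRate hh n
  unfold drift
  fun_prop

lemma continuous_flipProb {h : ℝ → ℝ} (hh : Continuous h) (n : ℕ) :
    Continuous (flipProb h n) := by
  have := continuous_flipRate hh n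
  unfold flipProb
  fun_prop

lemma normalizedMag_sub_normalizedMag {n : ℕ} (a σ : ℝ) (x y : Fin n → Bool) :
    normalizedMag n a σ x - normalizedMag n a σ y = (totalMag n x - totalMag n y) / σ := by
  rw [normalizedMag, normalizedMag]
  ring

lemma integrable_glauberPairLaw {h : ℝ → ℝ} {n : ℕ} [NeZero n] {a σ : ℝ} {f : ℝ × ℝ → ℝ}
    (hf : Continuous f) : Integrable f (glauberPairLaw h n a σ) :=
  (integrable_map_measure hf.aestronglyMeasurable
    (Measurable.of_discrete).aemeasurable).2 .of_finite

variable {h : ℝ → ℝ} {n : ℕ} {a σ : ℝ}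

lemma ae_abs_sub_le_glauberPairLaw (h : ℝ → ℝ) (n : ℕ) (a : ℝ) (hσ : 0 ≤ σ) :
    ∀ᵐ p ∂glauberPairLaw h n a σ, |p.1 - p.2| ≤ 2 / σ := by
  refine ae_stepLaw_of_forall_ae .of_discrete
    (measurableSet_le (by fun_prop) (by fun_prop)) fun x => ?_
  filter_upwards [ae_abs_totalMag_sub_le h x] with y hy
  rw [normalizedMag_sub_normalizedMag, abs_div, abs_of_nonneg hσ]
  gcongr

variable [NeZero n]

lemma add_mul_normalizedMag_div (hσ : σ ≠ 0) (x : Fin n → Bool) :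
    a + σ * normalizedMag n a σ x / n = magPP n x := by
  have hn : (n : ℝ) ≠ 0 := NeZero.ne _
  rw [normalizedMag, magPP]
  field_simp
  ring

lemma condExp_sub_glauberPairLaw (hh : Continuous h) (hσ : σ ≠ 0) :
    (glauberPairLaw h n a σ)[fun p => p.1 - p.2 | MeasurableSpace.comap Prod.fst measurableSpace]
      =ᵐ[glauberPairLaw h n a σ] fun p => drift h n (a + σ * p.1 / n) / σ := by
  have hdrift := continuous_drift hh n
  refine condExp_stepLaw_fst .of_discrete (integrable_glauberPairLaw (by fun_prop))
    (g := fun w => drift h n (a + σ * w / n) / σ) (by fun_prop) fun x => ?_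
  simp only [normalizedMag_sub_normalizedMag, integral_div, integral_totalMag_sub,
    add_mul_normalizedMag_div hσ]

lemma condExp_sub_sq_glauberPairLaw (hh : Continuous h) (hσ : σ ≠ 0) :
    (glauberPairLaw h n a σ)[fun p => (p.1 - p.2) ^ 2 |
        MeasurableSpace.comap Prod.fst measurableSpace]
      =ᵐ[glauberPairLaw h n a σ] fun p => 4 * flipProb h n (a + σ * p.1 / n) / σ ^ 2 := by
  have hflip := continuous_flipProb hh n
  refine condExp_stepLaw_fst .of_discrete (integrable_glauberPairLaw (by fun_prop))
    (g := fun w => 4 * flipProb h n (a + σ * w / n) / σ ^ 2) (by fun_prop) fun x => ?_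
  simp only [normalizedMag_sub_normalizedMag, div_pow, integral_div, integral_totalMag_sub_sq,
    add_mul_normalizedMag_div hσ]

lemma integral_abs_drift_glauberPairLaw (hh : Continuous h) (hσ : 0 < σ) (r : ℝ) :
    ∫ p, |drift h n (a + σ * p.1 / n) / σ - r / n * p.1| ∂glauberPairLaw h n a σ
      = (∫ x, |drift h n (magPP n x) - r * (magPP n x - a)| ∂gibbsMeasure (meanFieldEnergy h n))
        / σ := by
  have hdrift := continuous_drift hh n
  have hn : (n : ℝ) ≠ 0 := NeZero.ne _
  rw [glauberPairLaw, integral_fst_stepLaw (E := ℝ) .of_discrete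
    (g := fun w => |drift h n (a + σ * w / n) / σ - r / n * w|) (by fun_prop), ← integral_div]
  refine integral_congr_ae (.of_forall fun x => ?_)
  have hlinear : r / n * normalizedMag n a σ x = r * (magPP n x - a) / σ := by
    rw [normalizedMag, magPP]; field_simp
  beta_reduce
  rw [add_mul_normalizedMag_div hσ.ne', hlinear, ← sub_div, abs_div, abs_of_pos hσ]

lemma integral_abs_flipProb_glauberPairLaw (hh : Continuous h) (hσ : σ ≠ 0) {c : ℝ} (hc : 0 < c) :
    ∫ p, |1 - 2 / c * flipProb h n (a + σ * p.1 / n)| ∂glauberPairLaw h n a σ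
      = 2 / c * ∫ x, |flipProb h n (magPP n x) - c / 2| ∂gibbsMeasure (meanFieldEnergy h n) := by
  have hflip := continuous_flipProb hh n
  rw [glauberPairLaw, integral_fst_stepLaw (E := ℝ) .of_discrete
    (g := fun w => |1 - 2 / c * flipProb h n (a + σ * w / n)|) (by fun_prop),
    ← integral_const_mul]
  refine integral_congr_ae (.of_forall fun x => ?_)
  have hfactor : 2 / c * flipProb h n (magPP n x) - 1
      = 2 / c * (flipProb h n (magPP n x) - c / 2) := by
    field_simp
  beta_reduce
  rw [add_mul_normalizedMag_div hσ, abs_sub_comm, hfactor, abs_mul, abs_of_pos (by positivity)]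

end ExchangeablePair

section MainTheorem

/-- The normalization `σ_n = √(n / φ''(a))` of the fluctuations of the total magnetization around a
minimizer `a` of the free energy `φ`. -/
noncomputable def fluctuationScale (h : ℝ → ℝ) (n : ℕ) (a : ℝ) : ℝ :=
  √(n / iteratedDeriv 2 (freeEnergy h) a)

/-- The remainder `R_n`, as a function of `W_n`, in the approximate linear regression
`E(W_n - W_n' | W_n) = λ_n * W_n + R_n`. -/
noncomputable def regressionRemainder (h : ℝ → ℝ) (n : ℕ) (a w : ℝ) : ℝ :=
  drift h n (a + fluctuationScale h n a * w / n) / fluctuationScale h n a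
    - (1 - a ^ 2) * iteratedDeriv 2 (freeEnergy h) a / n * w

lemma measurable_regressionRemainder {h : ℝ → ℝ} (hh : Continuous h) (n : ℕ) (a : ℝ) :
    Measurable (regressionRemainder h n a) := by
  have hdrift := continuous_drift hh n
  unfold regressionRemainder
  fun_prop

namespace IsNondegenerateMinimizer

variable {h : ℝ → ℝ} {a : ℝ} {n : ℕ}

lemma sq_fluctuationScale (ha : IsNondegenerateMinimizer h a) :
    fluctuationScale h n a ^ 2 = n / iteratedDeriv 2 (freeEnergy h) a :=
  sq_sqrt (div_nonneg n.cast_nonneg ha.iteratedDeriv_pos.le)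

variable [NeZero n]

lemma fluctuationScale_pos (ha : IsNondegenerateMinimizer h a) : 0 < fluctuationScale h n a :=
  sqrt_pos.2 (div_pos (Nat.cast_pos.2 (NeZero.pos n)) ha.iteratedDeriv_pos)

lemma exists_integral_abs_regressionRemainder_le (hh : ContDiff ℝ 3 h)
    (ha : IsNondegenerateMinimizer h a) :
    ∃ C : ℝ, 0 ≤ C ∧ ∀ (n : ℕ) [NeZero n],
      ∫ p, |regressionRemainder h n a p.1| ∂glauberPairLaw h n a (fluctuationScale h n a)
        ≤ C * (n : ℝ) ^ (-(3 / 2 : ℝ)) := by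
  obtain ⟨C, hC, hdrift⟩ := ha.exists_integral_abs_drift_sub_le hh
  refine ⟨C * √(iteratedDeriv 2 (freeEnergy h) a), by positivity, fun n _ => ?_⟩
  have hn : (0 : ℝ) < n := Nat.cast_pos.2 (NeZero.pos n)
  have hpow : (n : ℝ) ^ (-(3 / 2 : ℝ)) = 1 / (n * √n) := by
    rw [rpow_neg hn.le, show (3 / 2 : ℝ) = 1 + 1 / 2 by norm_num, rpow_add hn, rpow_one,
      ← sqrt_eq_rpow, one_div]
  simp only [regressionRemainder]
  rw [integral_abs_drift_glauberPairLaw hh.continuous ha.fluctuationScale_pos]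
  calc _ ≤ C / n / fluctuationScale h n a :=
        div_le_div_of_nonneg_right (hdrift n) ha.fluctuationScale_pos.le
    _ = C * √(iteratedDeriv 2 (freeEnergy h) a) * (n : ℝ) ^ (-(3 / 2 : ℝ)) := by
        have hq := ha.iteratedDeriv_pos
        rw [fluctuationScale, sqrt_div hn.le, hpow]
        field_simp

lemma exists_integral_abs_one_sub_flipProb_le (hh : ContDiff ℝ 3 h)
    (ha : IsNondegenerateMinimizer h a) :
    ∃ C : ℝ, 0 ≤ C ∧ ∀ (n : ℕ) [NeZero n],
      ∫ p, |1 - 2 / (1 - a ^ 2) * flipProb h n (a + fluctuationScale h n a * p.1 / n)|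
        ∂glauberPairLaw h n a (fluctuationScale h n a) ≤ C * (n : ℝ) ^ (-(1 / 2 : ℝ)) := by
  obtain ⟨C, hC, hflip⟩ := ha.exists_integral_abs_flipProb_sub_le hh
  have hc := ha.one_sub_sq_pos
  refine ⟨2 / (1 - a ^ 2) * C, by positivity, fun n _ => ?_⟩
  rw [integral_abs_flipProb_glauberPairLaw hh.continuous ha.fluctuationScale_pos.ne' hc,
    rpow_neg n.cast_nonneg, ← sqrt_eq_rpow, mul_assoc, ← div_eq_mul_inv]
  gcongr
  exact hflip n

lemma ae_condExp_sub_sq (hh : Continuous h) (ha : IsNondegenerateMinimizer h a) :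
    ∀ᵐ p ∂glauberPairLaw h n a (fluctuationScale h n a),
      1 / (2 * ((1 - a ^ 2) * iteratedDeriv 2 (freeEnergy h) a / n)) *
          ((glauberPairLaw h n a (fluctuationScale h n a))[fun p => (p.1 - p.2) ^ 2 |
            MeasurableSpace.comap Prod.fst measurableSpace]) p
        = 2 / (1 - a ^ 2) * flipProb h n (a + fluctuationScale h n a * p.1 / n) := by
  filter_upwards [condExp_sub_sq_glauberPairLaw hh ha.fluctuationScale_pos.ne'] with p hp
  have hn : (n : ℝ) ≠ 0 := NeZero.ne _
  have hc := ha.one_sub_sq_pos.ne'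
  have hq := ha.iteratedDeriv_pos.ne'
  rw [hp, ha.sq_fluctuationScale]
  field_simp
  norm_num

end IsNondegenerateMinimizer

end MainTheorem

theorem stmt_15_general {h : ℝ → ℝ} (hh : ContDiff ℝ 3 h) {a : ℝ}
    (ha : IsNondegenerateMinimizer h a) :
    ∃ C : ℝ, 0 < C ∧ ∀ n : ℕ, 1 ≤ n →
      ∃ ν : Measure (ℝ × ℝ), IsProbabilityMeasure ν ∧
        ν.map Prod.swap = ν ∧
        ν.map Prod.fst = (gibbsMeasure (meanFieldEnergy h n)).map
          (fun x => (totalMag n x - n * a) / √(n / iteratedDeriv 2 (freeEnergy h) a)) ∧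
        (∀ᵐ p ∂ν, |p.1 - p.2| ≤ 2 / √(n / iteratedDeriv 2 (freeEnergy h) a)) ∧
        ∃ R : ℝ × ℝ → ℝ,
          Measurable[MeasurableSpace.comap Prod.fst measurableSpace] R ∧
          ν[fun p => p.1 - p.2 | MeasurableSpace.comap Prod.fst measurableSpace]
            =ᵐ[ν] (fun p => (1 - a ^ 2) * iteratedDeriv 2 (freeEnergy h) a / n * p.1 + R p) ∧
          ∫ p, |R p| ∂ν ≤ C * (n : ℝ) ^ (-(3 / 2 : ℝ)) ∧
          ∫ p, |1 - 1 / (2 * ((1 - a ^ 2) * iteratedDeriv 2 (freeEnergy h) a / n)) *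
              (ν[fun p => (p.1 - p.2) ^ 2 | MeasurableSpace.comap Prod.fst measurableSpace]) p| ∂ν
            ≤ C * (n : ℝ) ^ (-(1 / 2 : ℝ)) := by
  obtain ⟨C, hC, hremainder⟩ := ha.exists_integral_abs_regressionRemainder_le hh
  obtain ⟨D, hD, hvariance⟩ := ha.exists_integral_abs_one_sub_flipProb_le hh
  refine ⟨C + D + 1, by positivity, fun n hn => ?_⟩
  have : NeZero n := ⟨Nat.one_le_iff_ne_zero.1 hn⟩
  have hW : Measurable (normalizedMag n a (fluctuationScale h n a)) := .of_discrete
  refine ⟨glauberPairLaw h n a (fluctuationScale h n a), isProbabilityMeasure_stepLaw hW,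
    map_swap_stepLaw (isReversible_glauberKernel _) hW, map_fst_stepLaw hW,
    ae_abs_sub_le_glauberPairLaw h n a ha.fluctuationScale_pos.le,
    fun p => regressionRemainder h n a p.1,
    (measurable_regressionRemainder hh.continuous n a).comp (comap_measurable Prod.fst), ?_, ?_, ?_⟩
  · simpa only [regressionRemainder, add_sub_cancel] using
      condExp_sub_glauberPairLaw hh.continuous ha.fluctuationScale_pos.ne'
  · exact (hremainder n).trans (by gcongr; linarith)
  · rw [integral_congr_ae ((ha.ae_condExp_sub_sq hh.continuous).mono fun p hp =>
      congrArg (|1 - ·|) hp)]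
    exact (hvariance n).trans (by gcongr; linarith)

/-- Construction of the Glauber-dynamics exchangeable pair for the cubic
Curie–Weiss model: for the unique nondegenerate minimizer `m*` of `φ_{K,J}` there is
`C > 0` such that for each `n ≥ 1` there is an exchangeable pair (realized by its
joint law `ν` on `ℝ × ℝ`, with `W = fst`, `W' = snd`) whose first marginal is the
law of `(S_n − n m*)/σ_n` under `P_{n,K,J}`, with `|W − W'| ≤ 2/σ_n` a.s.,
`E(W − W'|W) = λ_n W + R_n` for a `σ(W)`-measurable `R_n` with
`E|R_n| ≤ C n^{−3/2}`, and `E|1 − (1/(2λ_n)) E((W−W')²|W)| ≤ C n^{−1/2}`. -/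
theorem stmt_15 (K J : ℝ) (hK : 0 < K) (mstar : ℝ)
    (hmem : mstar ∈ Set.Ioo (-1 : ℝ) 1)
    (hmin : ∀ y ∈ Set.Icc (-1 : ℝ) 1, phiKJ K J mstar ≤ phiKJ K J y)
    (huniq : ∀ y ∈ Set.Icc (-1 : ℝ) 1, phiKJ K J y = phiKJ K J mstar → y = mstar)
    (hconv : 0 < iteratedDeriv 2 (phiKJ K J) mstar) :
    ∃ C : ℝ, 0 < C ∧ ∀ n : ℕ, 1 ≤ n →
      ∃ ν : Measure (ℝ × ℝ), IsProbabilityMeasure ν ∧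
        ν.map Prod.swap = ν ∧
        ν.map Prod.fst = (cubicMeasure n K J).map
          (fun x => (totalMag n x - n * mstar) /
            Real.sqrt (n / iteratedDeriv 2 (phiKJ K J) mstar)) ∧
        (∀ᵐ p ∂ν, |p.1 - p.2| ≤
          2 / Real.sqrt (n / iteratedDeriv 2 (phiKJ K J) mstar)) ∧
        ∃ R : ℝ × ℝ → ℝ,
          Measurable[MeasurableSpace.comap (Prod.fst : ℝ × ℝ → ℝ) Real.measurableSpace] R ∧
          ((ν[fun p => p.1 - p.2 |
              MeasurableSpace.comap (Prod.fst : ℝ × ℝ → ℝ) Real.measurableSpace])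
            =ᵐ[ν] fun p =>
              (1 - mstar ^ 2) * iteratedDeriv 2 (phiKJ K J) mstar / n * p.1 + R p) ∧
          (∫ p, |R p| ∂ν) ≤ C * (n : ℝ) ^ (-(3/2 : ℝ)) ∧
          (∫ p, |1 - (1 / (2 * ((1 - mstar ^ 2) * iteratedDeriv 2 (phiKJ K J) mstar / n))) *
              (ν[fun p => (p.1 - p.2) ^ 2 |
                MeasurableSpace.comap (Prod.fst : ℝ × ℝ → ℝ) Real.measurableSpace]) p| ∂ν)
            ≤ C * (n : ℝ) ^ (-(1/2 : ℝ)) := by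
  have hφ : phiKJ K J = freeEnergy fun m => K / 3 * m ^ 3 + J / 2 * m ^ 2 :=
    funext fun m => sub_sub _ _ _
  rw [hφ] at hmin huniq hconv ⊢
  exact stmt_15_general (by fun_prop) ⟨hmem, fun m hm hne =>
    (hmin m hm).lt_of_ne fun heq => hne (huniq m hm heq.symm), hconv⟩
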